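/- Fix r > 0 and γ > r. Let q₀ = (4/3)√(2r/(γ(γ−r))) and define E(λ) = r − ∫_0^r exp(−λ Q_γ(γ−c)) dc where Q_γ(u) = 2∫_{γ−r}^u arccos((w²+γ²−r²)/(2wγ)) dw. Then r − E(λ) ~ Γ(5/3)/(λ q₀)^{2/3} as λ → ∞; that is, the expected single-hop advancement satisfies 𝔼(C) = r − Γ(5/3)(λ q₀)^{−2/3} + o(λ^{−2/3}). -/

import Mathlib

open Filter Topology MeasureTheory Set

lemma core_lim (q : ℝ → ℝ) (r c q₀ : ℝ) (hr : 0 < r) (hc : 0 < c) (hq₀ : 0 < q₀)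
    (hq : Continuous q) (hlow : ∀ t, 0 < t → t ≤ r → c * t ^ ((3:ℝ)/2) ≤ q t)
    (hlim : Tendsto (fun t => q t / t ^ ((3:ℝ)/2)) (𝓝[>] 0) (𝓝 q₀)) :
    Tendsto (fun lam : ℝ => lam ^ ((2:ℝ)/3) * ∫ t in (0:ℝ)..r, Real.exp (-(lam * q t)))
      atTop (𝓝 (q₀ ^ (-(2:ℝ)/3) * Real.Gamma (5/3))) := by
  have hval : ∫ s in Ioi (0:ℝ), Real.exp (-q₀ * s ^ ((3:ℝ)/2))
      = q₀ ^ (-(2:ℝ)/3) * Real.Gamma (5/3) := by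
    rw [integral_exp_neg_mul_rpow (by norm_num) hq₀]
    norm_num
  rw [← hval]
  have hint : IntegrableOn (fun s : ℝ => Real.exp (-c * s ^ ((3:ℝ)/2))) (Ioi 0) := by
    have := integrableOn_rpow_mul_exp_neg_mul_rpow (s := 0) (p := (3:ℝ)/2) (b := c)
      (by norm_num) (by norm_num) hc
    simpa using this
  have key : ∀ lam : ℝ, 0 < lam → ∀ s : ℝ, 0 < s →
      lam * (s / lam ^ ((2:ℝ)/3)) ^ ((3:ℝ)/2) = s ^ ((3:ℝ)/2) := by
    intro lam hl s hs
    rw [Real.div_rpow hs.le (by positivity), ← Real.rpow_mul hl.le]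
    norm_num
    field_simp
  have main : Tendsto (fun lam : ℝ => ∫ s in Ioi (0:ℝ),
      (Iic (r * lam ^ ((2:ℝ)/3))).indicator
        (fun s => Real.exp (-(lam * q (s / lam ^ ((2:ℝ)/3))))) s)
      atTop (𝓝 (∫ s in Ioi (0:ℝ), Real.exp (-q₀ * s ^ ((3:ℝ)/2)))) := by
    refine tendsto_integral_filter_of_dominated_convergence
      (fun s : ℝ => Real.exp (-c * s ^ ((3:ℝ)/2))) ?_ ?_ hint ?_
    · refine Eventually.of_forall fun lam => ?_
      refine (Measurable.indicator ?_ measurableSet_Iic).aestronglyMeasurable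
      exact (by fun_prop : Continuous _).measurable
    · filter_upwards [eventually_gt_atTop 0] with lam hl
      refine (ae_restrict_iff' measurableSet_Ioi).2 (Eventually.of_forall fun s hs => ?_)
      have hs : 0 < s := hs
      have ha : 0 < lam ^ ((2:ℝ)/3) := by positivity
      by_cases h : s ∈ Iic (r * lam ^ ((2:ℝ)/3))
      · rw [indicator_of_mem h, Real.norm_of_nonneg (Real.exp_pos _).le, Real.exp_le_exp]
        have h1 := hlow (s / lam ^ ((2:ℝ)/3)) (by positivity) ((div_le_iff₀ ha).2 h)
        have h2 := mul_le_mul_of_nonneg_left h1 hl.le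
        have h3 := key lam hl s hs
        have h4 : lam * (c * (s / lam ^ ((2:ℝ)/3)) ^ ((3:ℝ)/2)) = c * s ^ ((3:ℝ)/2) := by
          rw [← h3]; ring
        linarith
      · rw [indicator_of_notMem h, norm_zero]
        positivity
    · refine (ae_restrict_iff' measurableSet_Ioi).2 (Eventually.of_forall fun s hs => ?_)
      have hs : 0 < s := hs
      have hatop : Tendsto (fun lam : ℝ => lam ^ ((2:ℝ)/3)) atTop atTop :=
        tendsto_rpow_atTop (by norm_num)
      have h0 : Tendsto (fun lam : ℝ => s / lam ^ ((2:ℝ)/3)) atTop (𝓝[>] 0) := by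
        refine tendsto_nhdsWithin_iff.2 ⟨hatop.const_div_atTop s, ?_⟩
        filter_upwards [eventually_gt_atTop 0] with lam hl
        exact div_pos hs (by positivity)
      have h1 := ((hlim.comp h0).mul_const (s ^ ((3:ℝ)/2))).neg
      have h2 := (Real.continuous_exp.tendsto _).comp h1
      rw [← neg_mul] at h2
      refine h2.congr' ?_
      filter_upwards [eventually_gt_atTop 0,
        (hatop.const_mul_atTop hr).eventually_ge_atTop s] with lam hl hle
      rw [indicator_of_mem (show s ∈ Iic (r * lam ^ ((2:ℝ)/3)) from hle)]
      simp only [Function.comp]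
      congr 2
      have hp : 0 < (s / lam ^ ((2:ℝ)/3)) ^ ((3:ℝ)/2) := by positivity
      rw [← key lam hl s hs]
      field_simp
  refine main.congr' ?_
  filter_upwards [eventually_gt_atTop 0] with lam hl
  have ha : 0 < lam ^ ((2:ℝ)/3) := by positivity
  have := intervalIntegral.integral_comp_div (a := 0) (b := r * lam ^ ((2:ℝ)/3))
    (fun t => Real.exp (-(lam * q t))) ha.ne'
  rw [zero_div, mul_div_assoc, div_self ha.ne', mul_one, smul_eq_mul] at this
  rw [← this, intervalIntegral.integral_of_le (by positivity),
    setIntegral_indicator measurableSet_Iic, Ioi_inter_Iic]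

lemma arccos_lim (r γ : ℝ) (hr : 0 < r) (hγ : r < γ) :
    Tendsto (fun t : ℝ => Real.arccos (((γ - r + t) ^ 2 + γ ^ 2 - r ^ 2) / (2 * (γ - r + t) * γ))
      / √t) (𝓝[>] 0) (𝓝 (√(2 * r / (γ * (γ - r))))) := by
  have hγ0 : 0 < γ := hr.trans hγ
  have hd : 0 < γ - r := sub_pos.2 hγ
  -- e t = eps / t
  let e : ℝ → ℝ := fun t => (2 * r - t) / (2 * (γ - r + t) * γ)
  have he : ContinuousAt e 0 := by
    refine ContinuousAt.div (by fun_prop) (by fun_prop) ?_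
    have : 0 < 2 * (γ - r + 0) * γ := by rw [add_zero]; positivity
    exact this.ne'
  let p : ℝ → ℝ := fun t => e t * (2 - t * e t)
  have hp : ContinuousAt p 0 := by fun_prop
  have hp0 : p 0 = 2 * r / (γ * (γ - r)) := by
    simp only [p, e]; field_simp; ring
  have hppos : 0 < p 0 := by rw [hp0]; positivity
  let y : ℝ → ℝ := fun t => √(t * p t)
  have hy : ContinuousAt y 0 := by fun_prop
  have hy0 : y 0 = 0 := by simp [y]
  have hev : ∀ᶠ t in 𝓝[>] (0:ℝ), 0 < t ∧ 0 < p t ∧ 0 ≤ 1 - t * e t := by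
    have h1 : ∀ᶠ t in 𝓝 (0:ℝ), 0 < p t := hp.eventually (lt_mem_nhds hppos)
    have h2 : ∀ᶠ t in 𝓝 (0:ℝ), 0 < 1 - t * e t := by
      have : ContinuousAt (fun t => 1 - t * e t) 0 := by fun_prop
      exact this.eventually (lt_mem_nhds (by simp))
    filter_upwards [self_mem_nhdsWithin, nhdsWithin_le_nhds h1, nhdsWithin_le_nhds h2] with t a b c
    exact ⟨a, b, c.le⟩
  have hyt : Tendsto y (𝓝[>] 0) (𝓝[≠] 0) := by
    refine tendsto_nhdsWithin_iff.2 ⟨?_, ?_⟩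
    · have := hy.tendsto.mono_left (nhdsWithin_le_nhds (s := Ioi 0))
      rwa [hy0] at this
    · filter_upwards [hev] with t ⟨h1, h2, _⟩
      exact (Real.sqrt_pos.2 (mul_pos h1 h2)).ne'
  have harc : Tendsto (fun x : ℝ => Real.arcsin x / x) (𝓝[≠] 0) (𝓝 1) := by
    have := (Real.hasDerivAt_arcsin (x := 0) (by norm_num) (by norm_num))
    rw [hasDerivAt_iff_tendsto_slope_zero] at this
    simp at this
    refine this.congr fun x => ?_
    rw [div_eq_inv_mul]
  have hsp : Tendsto (fun t => √(p t)) (𝓝[>] 0) (𝓝 (√(p 0))) :=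
    (by fun_prop : ContinuousAt (fun t => √(p t)) 0).tendsto.mono_left nhdsWithin_le_nhds
  have := (harc.comp hyt).mul hsp
  rw [one_mul, hp0] at this
  refine this.congr' ?_
  filter_upwards [hev] with t ⟨h1, h2, h3⟩
  have hw : 0 < γ - r + t := by linarith
  have hx : ((γ - r + t) ^ 2 + γ ^ 2 - r ^ 2) / (2 * (γ - r + t) * γ) = 1 - t * e t := by
    simp only [e]; field_simp; ring
  rw [hx, Real.arccos_eq_arcsin h3]
  have : 1 - (1 - t * e t) ^ 2 = t * p t := by simp only [p]; ring
  rw [this]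
  simp only [Function.comp, y]
  rw [Real.sqrt_mul h1.le]
  have := Real.sqrt_pos.2 h1
  have := Real.sqrt_pos.2 h2
  field_simp

lemma arccos_low (r γ t : ℝ) (hr : 0 < r) (hγ : r < γ) (ht : 0 ≤ t) (htr : t ≤ r) :
    (√r / γ) * √t ≤
      Real.arccos (((γ - r + t) ^ 2 + γ ^ 2 - r ^ 2) / (2 * (γ - r + t) * γ)) := by
  have hγ0 : 0 < γ := hr.trans hγ
  have hw : 0 < γ - r + t := by linarith
  set x := (√r / γ) * √t with hx
  have hx0 : 0 ≤ x := by positivity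
  have hx2 : x ^ 2 = r * t / γ ^ 2 := by
    rw [hx, mul_pow, div_pow, Real.sq_sqrt hr.le, Real.sq_sqrt ht]; ring
  have hx1 : x ≤ 1 := by
    have : x ^ 2 ≤ 1 := by
      rw [hx2, div_le_one (by positivity)]; nlinarith
    nlinarith
  rw [← Real.arccos_cos hx0 (by linarith [Real.pi_gt_three])]
  refine Real.arccos_le_arccos ?_
  refine le_trans ?_ (Real.one_sub_sq_div_two_le_cos)
  rw [hx2]
  have e1 : ((γ - r + t) ^ 2 + γ ^ 2 - r ^ 2) / (2 * (γ - r + t) * γ)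
      = 1 - t * (2 * r - t) / (2 * (γ - r + t) * γ) := by field_simp; ring
  rw [e1]
  have : r * t / γ ^ 2 / 2 ≤ t * (2 * r - t) / (2 * (γ - r + t) * γ) := by
    rw [div_div]
    refine div_le_div₀ (by nlinarith) (by nlinarith) (by positivity) (by nlinarith)
  linarith


/-- First hop moment asymptotics (Theorem 5.1, first part): with
q₀ = (4/3)√(2r/(γ(γ−r))) and 𝔼(C)(λ) = r − ∫_0^r e^{−λ Q_γ(γ−c)} dc,
we have r − 𝔼(C)(λ) ~ Γ(5/3)/(λ q₀)^{2/3} as λ → ∞. -/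
theorem stmt_8 (r γ : ℝ) (hr : 0 < r) (hγ : r < γ)
    (q₀ : ℝ) (hq₀ : q₀ = (4 / 3) * Real.sqrt (2 * r / (γ * (γ - r))))
    (Q : ℝ → ℝ)
    (hQ : ∀ u, Q u =
      2 * ∫ w in (γ - r)..u, Real.arccos ((w ^ 2 + γ ^ 2 - r ^ 2) / (2 * w * γ)))
    (E : ℝ → ℝ)
    (hE : ∀ lam, E lam = r - ∫ c in (0 : ℝ)..r, Real.exp (-(lam * Q (γ - c)))) :
    Filter.Tendsto
      (fun lam => (r - E lam) / (Real.Gamma (5 / 3) / (lam * q₀) ^ ((2 : ℝ) / 3)))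
      Filter.atTop (nhds 1) := by

  have hγ0 : 0 < γ := hr.trans hγ
  have hd : 0 < γ - r := sub_pos.2 hγ
  have hq0 : 0 < q₀ := by rw [hq₀]; positivity
  let g : ℝ → ℝ := fun t =>
    Real.arccos (((γ - r + t) ^ 2 + γ ^ 2 - r ^ 2) / (2 * (γ - r + t) * γ))
  have hgm : Measurable g := Real.continuous_arccos.measurable.comp (by fun_prop)
  have hgi : ∀ a b, IntervalIntegrable g volume a b := by
    intro a b
    refine (intervalIntegrable_const (c := Real.pi)).mono_fun hgm.aestronglyMeasurable ?_
    refine Eventually.of_forall fun t => ?_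
    simp only [g]
    rw [Real.norm_of_nonneg (Real.arccos_nonneg _), Real.norm_of_nonneg Real.pi_pos.le]
    exact Real.arccos_le_pi _
  let q : ℝ → ℝ := fun t => 2 * ∫ s in (0:ℝ)..t, g s
  have hqQ : ∀ t, Q (γ - r + t) = q t := by
    intro t
    rw [hQ]
    simp only [q, g]
    rw [intervalIntegral.integral_comp_add_left
      (fun w => Real.arccos ((w ^ 2 + γ ^ 2 - r ^ 2) / (2 * w * γ))), add_zero]
  have hqc : Continuous q := continuous_const.mul (intervalIntegral.continuous_primitive hgi 0)
  have hderiv : ∀ t, 0 < t → HasDerivAt q (2 * g t) t := by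
    intro t ht
    refine HasDerivAt.const_mul 2 ?_
    refine intervalIntegral.integral_hasDerivAt_right (hgi _ _)
      hgm.stronglyMeasurable.stronglyMeasurableAtFilter ?_
    refine Real.continuous_arccos.continuousAt.comp ?_
    refine ContinuousAt.div (by fun_prop) (by fun_prop) ?_
    have : 0 < 2 * (γ - r + t) * γ := by positivity
    exact this.ne'
  have hlim : Tendsto (fun t => q t / t ^ ((3:ℝ)/2)) (𝓝[>] 0) (𝓝 q₀) := by
    refine HasDerivAt.lhopital_zero_nhdsGT (f' := fun t => 2 * g t)
      (g' := fun t => (3:ℝ)/2 * t ^ ((3:ℝ)/2 - 1)) ?_ ?_ ?_ ?_ ?_ ?_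
    · filter_upwards [self_mem_nhdsWithin] with t ht using hderiv t ht
    · filter_upwards [self_mem_nhdsWithin] with t ht
      exact Real.hasDerivAt_rpow_const (Or.inl (ne_of_gt ht))
    · filter_upwards [self_mem_nhdsWithin] with t ht
      have ht : 0 < t := ht
      positivity
    · have := (hqc.tendsto 0).mono_left (nhdsWithin_le_nhds (s := Ioi 0))
      simpa [q] using this
    · have : Continuous fun t : ℝ => t ^ ((3:ℝ)/2) := Real.continuous_rpow_const (by norm_num)
      have := (this.tendsto 0).mono_left (nhdsWithin_le_nhds (s := Ioi 0))
      rwa [Real.zero_rpow (by norm_num)] at this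
    · have := (arccos_lim r γ hr hγ).const_mul (4/3)
      rw [← hq₀] at this
      refine this.congr fun t => ?_
      rw [Real.sqrt_eq_rpow]
      simp only [g]
      norm_num
      ring
  have hlow : ∀ t, 0 < t → t ≤ r → (4/3 * (√r / γ)) * t ^ ((3:ℝ)/2) ≤ q t := by
    intro t ht htr
    have h1 : ∫ s in (0:ℝ)..t, (√r / γ) * √s ≤ ∫ s in (0:ℝ)..t, g s := by
      refine intervalIntegral.integral_mono_on ht.le ?_ (hgi _ _) ?_
      · exact (by fun_prop : Continuous fun s : ℝ => (√r / γ) * √s).intervalIntegrable _ _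
      · intro s hs
        exact arccos_low r γ s hr hγ hs.1 (hs.2.trans htr)
    have h2 : ∫ s in (0:ℝ)..t, (√r / γ) * √s = (√r / γ) * (2/3 * t ^ ((3:ℝ)/2)) := by
      rw [intervalIntegral.integral_const_mul]
      congr 1
      simp_rw [Real.sqrt_eq_rpow]
      rw [integral_rpow (Or.inl (by norm_num))]
      norm_num
      ring
    simp only [q]
    rw [h2] at h1
    linarith
  have hcore := core_lim q r (4/3 * (√r / γ)) q₀ hr (by positivity) hq0 hqc hlow hlim
  have hG : 0 < Real.Gamma (5/3) := Real.Gamma_pos_of_pos (by norm_num)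
  have hfin := hcore.mul_const (q₀ ^ ((2:ℝ)/3) / Real.Gamma (5/3))
  have hone : q₀ ^ (-(2:ℝ)/3) * Real.Gamma (5/3) * (q₀ ^ ((2:ℝ)/3) / Real.Gamma (5/3)) = 1 := by
    rw [neg_div, Real.rpow_neg hq0.le]
    have : 0 < q₀ ^ ((2:ℝ)/3) := by positivity
    field_simp
  rw [hone] at hfin
  refine hfin.congr' ?_
  filter_upwards [eventually_gt_atTop 0] with lam hl
  have hI : r - E lam = ∫ t in (0:ℝ)..r, Real.exp (-(lam * q t)) := by
    rw [hE, sub_sub_cancel]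
    have := intervalIntegral.integral_comp_sub_left (a := 0) (b := r)
      (fun t => Real.exp (-(lam * q t))) r
    rw [sub_self, sub_zero] at this
    rw [← this]
    refine intervalIntegral.integral_congr fun c _ => ?_
    rw [← hqQ]
    congr 4
    ring
  rw [hI, Real.mul_rpow hl.le hq0.le]
  field_simp
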